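/- There exist an integer p ≥ 2, an integer n ≥ 1, a connected interconnection Γ = [γ_ij] ∈ ℝ^{p×p}, and a map Q : ℝ≥0 → Q̄_n satisfying liminf_{T→∞} (1/T) σ_min(∫₀^T Q_t dt) > 0, such that for some initial condition the solutions x_i of the array ẋ_i(t) = Q_t Σ_{j≠i} γ_ij (x_j(t) − x_i(t)), i = 1,…,p, do not synchronize (there is no common trajectory x̄ with |x_i(t) − x̄(t)| → 0 for all i). -/

import Mathlib

open Matrix MeasureTheory Filter
open scoped Kronecker

noncomputable section

/-- Euclidean norm of a vector. -/
def eunorm {ι : Type*} [Fintype ι] (v : ι → ℝ) : ℝ := Real.sqrt (∑ i, v i ^ 2)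

/-- Spectral (induced 2-) norm of a matrix. -/
def specNorm {m n : Type*} [Fintype m] [Fintype n] (M : Matrix m n ℝ) : ℝ :=
  sSup {c : ℝ | ∃ v : n → ℝ, eunorm v ≤ 1 ∧ c = eunorm (M.mulVec v)}

/-- Smallest singular value of a matrix. -/
def sigmaMin {m n : Type*} [Fintype m] [Fintype n] (M : Matrix m n ℝ) : ℝ :=
  sInf {c : ℝ | ∃ v : n → ℝ, eunorm v = 1 ∧ c = eunorm (M.mulVec v)}

/-- Largest singular value of a matrix. -/
def sigmaMax {m n : Type*} [Fintype m] [Fintype n] (M : Matrix m n ℝ) : ℝ :=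
  sSup {c : ℝ | ∃ v : n → ℝ, eunorm v = 1 ∧ c = eunorm (M.mulVec v)}

/-- A continuous-time interconnection matrix. -/
def IsInterconnection {p : ℕ} (Γ : Matrix (Fin p) (Fin p) ℝ) : Prop :=
  (∀ i j, i ≠ j → 0 ≤ Γ i j) ∧
  ∀ i, Γ i i = -∑ j ∈ Finset.univ.filter (fun j => j ≠ i), Γ i j

/-- Connectedness of the graph of a matrix. -/
def ConnectedMat {p : ℕ} (Γ : Matrix (Fin p) (Fin p) ℝ) : Prop :=
  ∃ v : Fin p, ∀ u : Fin p, Relation.ReflTransGen (fun i j => 0 < Γ i j) u v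

/-- Membership in `Q̄_n`: symmetric positive semidefinite with spectral norm at most 1. -/
def InQbar {n : ℕ} (R : Matrix (Fin n) (Fin n) ℝ) : Prop :=
  R.PosSemidef ∧ specNorm R ≤ 1

/-- `δ(ε, T) = min{ε/2, ε³/(240 T⁵)}`. -/
def deltaCT (ε T : ℝ) : ℝ := min (ε / 2) (ε ^ 3 / (240 * T ^ 5))

/-- Sufficient excitation for `Q : ℝ≥0 → Q_n`. -/
def SuffExcitingCT {n : ℕ} (Q : ℝ → Matrix (Fin n) (Fin n) ℝ) : Prop :=
  ∃ ε T : ℕ → ℝ, (∀ i, 0 < ε i) ∧ (∀ i, 0 < T i) ∧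
    (∀ i, ε i ≤ sigmaMin (Matrix.of fun a b =>
      ∫ t in (∑ j ∈ Finset.range i, T j)..((∑ j ∈ Finset.range i, T j) + T i), Q t a b)) ∧
    Tendsto (fun N => ∑ i ∈ Finset.range N, deltaCT (ε i) (T i)) atTop atTop

/-- Persistence of excitation for `Q : ℝ≥0 → Q_n`. -/
def PersExcitingCT {n : ℕ} (Q : ℝ → Matrix (Fin n) (Fin n) ℝ) : Prop :=
  ∃ ε T : ℝ, 0 < ε ∧ 0 < T ∧ ∀ t : ℝ, 0 ≤ t →
    ε ≤ sigmaMin (Matrix.of fun a b => ∫ s in t..(t + T), Q s a b)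

/-- The phase of the slowly rotating frame. -/
def framePhase (s : ℝ) : ℝ := Real.log s / 2

/-- In the frame `u = (cos θ, sin θ)`, `w = (-sin θ, cos θ)` with `θ = framePhase s`, this is
`(u / s - w / 2) (u / s - w / 2)ᵀ + (1 / 4) w wᵀ`. -/
def rotatingGain (s : ℝ) : Matrix (Fin 2) (Fin 2) ℝ :=
  let c := Real.cos (framePhase s)
  let d := Real.sin (framePhase s)
  !![(c / s + d / 2) ^ 2 + d ^ 2 / 4, (c / s + d / 2) * (d / s - c / 2) - d * c / 4;
     (c / s + d / 2) * (d / s - c / 2) - d * c / 4, (d / s - c / 2) ^ 2 + c ^ 2 / 4]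

/-- The gain on `ℝ`, frozen for negative times so as to be continuous everywhere. -/
def shiftedGain (t : ℝ) : Matrix (Fin 2) (Fin 2) ℝ := rotatingGain (max t 0 + 2)

/-- A non-vanishing solution of `y' = -Q y` with `Q` the rotating gain. -/
def spiral (s : ℝ) : Fin 2 → ℝ :=
  ![Real.exp (1 / s) * Real.cos (framePhase s), Real.exp (1 / s) * Real.sin (framePhase s)]

lemma shiftedGain_of_nonneg {t : ℝ} (ht : 0 ≤ t) : shiftedGain t = rotatingGain (t + 2) := by
  rw [shiftedGain, max_eq_left ht]

lemma eunorm_sq_fin_two (v : Fin 2 → ℝ) : eunorm v ^ 2 = v 0 ^ 2 + v 1 ^ 2 := by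
  rw [eunorm, Real.sq_sqrt (by positivity), Fin.sum_univ_two]

lemma eunorm_nonneg {ι : Type*} [Fintype ι] (v : ι → ℝ) : 0 ≤ eunorm v := Real.sqrt_nonneg _

lemma abs_apply_le_eunorm {ι : Type*} [Fintype ι] (v : ι → ℝ) (i : ι) : |v i| ≤ eunorm v :=
  Real.abs_le_sqrt (Finset.single_le_sum (f := fun j => v j ^ 2) (fun _ _ => sq_nonneg _)
    (Finset.mem_univ i))

lemma dotProduct_le_eunorm {v : Fin 2 → ℝ} (hv : eunorm v = 1) (m : Fin 2 → ℝ) :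
    v ⬝ᵥ m ≤ eunorm m := by
  have h1 := eunorm_sq_fin_two v
  have h2 := eunorm_sq_fin_two m
  rw [hv] at h1
  refine le_of_sq_le_sq ?_ (eunorm_nonneg m)
  rw [h2, dotProduct, Fin.sum_univ_two]
  nlinarith [sq_nonneg (v 0 * m 1 - v 1 * m 0)]

lemma dotProduct_rotatingGain_mulVec (s : ℝ) (v : Fin 2 → ℝ) :
    v ⬝ᵥ (rotatingGain s *ᵥ v) =
      ((v 0 * Real.cos (framePhase s) + v 1 * Real.sin (framePhase s)) / s
        - (v 1 * Real.cos (framePhase s) - v 0 * Real.sin (framePhase s)) / 2) ^ 2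
      + (v 1 * Real.cos (framePhase s) - v 0 * Real.sin (framePhase s)) ^ 2 / 4 := by
  simp only [rotatingGain, dotProduct, mulVec, Fin.sum_univ_two, of_apply, cons_val', cons_val_zero,
    cons_val_one, cons_val_fin_one]
  ring

lemma posSemidef_rotatingGain (s : ℝ) : (rotatingGain s).PosSemidef := by
  refine PosSemidef.of_dotProduct_mulVec_nonneg ?_ fun v => ?_
  · ext i j
    fin_cases i <;> fin_cases j <;> simp [rotatingGain]
  · rw [star_trivial, dotProduct_rotatingGain_mulVec]
    positivity

lemma frame_gain_contracts {e : ℝ} (he0 : 0 ≤ e) (he1 : e ≤ 1 / 2) (a b : ℝ) :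
    (e ^ 2 * a - e / 2 * b) ^ 2 + (-e / 2 * a + b / 2) ^ 2 ≤ a ^ 2 + b ^ 2 := by
  have he2 : e ^ 2 ≤ 1 / 4 := by nlinarith
  have he4 : e ^ 4 ≤ 1 / 16 := by nlinarith [sq_nonneg e]
  have ha2 := mul_le_mul_of_nonneg_right he2 (sq_nonneg a)
  have ha4 := mul_le_mul_of_nonneg_right he4 (sq_nonneg a)
  have hb2 := mul_le_mul_of_nonneg_right he2 (sq_nonneg b)
  linarith [sq_nonneg (e ^ 2 * a + e / 2 * b), sq_nonneg (e / 2 * a + b / 2), sq_nonneg a,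
    sq_nonneg b]

lemma rotatingGain_mulVec (s : ℝ) (v : Fin 2 → ℝ) :
    let c := Real.cos (framePhase s)
    let d := Real.sin (framePhase s)
    let a := v 0 * c + v 1 * d
    let b := v 1 * c - v 0 * d
    rotatingGain s *ᵥ v =
      ![c * (s⁻¹ ^ 2 * a - s⁻¹ / 2 * b) - d * (-s⁻¹ / 2 * a + b / 2),
        d * (s⁻¹ ^ 2 * a - s⁻¹ / 2 * b) + c * (-s⁻¹ / 2 * a + b / 2)] := by
  ext i
  fin_cases i <;>
    simp only [rotatingGain, mulVec, dotProduct, Fin.sum_univ_two, of_apply, cons_val',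
      cons_val_zero, cons_val_one, cons_val_fin_one, Fin.zero_eta, Fin.mk_one, Fin.isValue] <;>
    ring

lemma eunorm_rotatingGain_mulVec_le {s : ℝ} (hs : 2 ≤ s) (v : Fin 2 → ℝ) :
    eunorm (rotatingGain s *ᵥ v) ≤ eunorm v := by
  refine le_of_sq_le_sq ?_ (eunorm_nonneg v)
  have hcd := Real.cos_sq_add_sin_sq (framePhase s)
  have he0 : 0 ≤ s⁻¹ := by positivity
  have he1 : s⁻¹ ≤ 1 / 2 := by rw [← one_div]; gcongr
  rw [eunorm_sq_fin_two, eunorm_sq_fin_two, rotatingGain_mulVec]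
  simp only [cons_val_zero, cons_val_one]
  generalize Real.cos (framePhase s) = c at *
  generalize Real.sin (framePhase s) = d at *
  have hrot : ∀ x y : ℝ, (c * x - d * y) ^ 2 + (d * x + c * y) ^ 2 = x ^ 2 + y ^ 2 :=
    fun x y => by linear_combination (x ^ 2 + y ^ 2) * hcd
  have hv : (v 0 * c + v 1 * d) ^ 2 + (v 1 * c - v 0 * d) ^ 2 = v 0 ^ 2 + v 1 ^ 2 := by
    linear_combination (v 0 ^ 2 + v 1 ^ 2) * hcd
  rw [hrot, ← hv]
  exact frame_gain_contracts he0 he1 _ _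

lemma inQbar_rotatingGain {s : ℝ} (hs : 2 ≤ s) : InQbar (rotatingGain s) := by
  refine ⟨posSemidef_rotatingGain s, Real.sSup_le ?_ zero_le_one⟩
  rintro _ ⟨v, hv, rfl⟩
  exact (eunorm_rotatingGain_mulVec_le hs v).trans hv

lemma continuous_shiftedGain_apply (a b : Fin 2) : Continuous fun t => shiftedGain t a b := by
  have hpos : ∀ t : ℝ, max t 0 + 2 ≠ 0 := fun t => by positivity
  have hs : Continuous fun t : ℝ => max t 0 + 2 := by fun_prop
  have hθ : Continuous fun t : ℝ => framePhase (max t 0 + 2) := (hs.log hpos).div_const 2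
  have hc := Real.continuous_cos.comp hθ
  have hd := Real.continuous_sin.comp hθ
  have hcs := hc.div hs hpos
  have hds := hd.div hs hpos
  simp only [Function.comp_def] at hc hd
  simp only [Pi.div_def, Function.comp_def] at hcs hds
  fin_cases a <;> fin_cases b <;>
    simp only [shiftedGain, rotatingGain, of_apply, cons_val', cons_val_zero, cons_val_one,
      cons_val_fin_one, Fin.zero_eta, Fin.mk_one, Fin.isValue] <;>
    fun_prop

lemma abs_rotatingGain_apply_le {s : ℝ} (hs : 2 ≤ s) (a b : Fin 2) :
    |rotatingGain s a b| ≤ 1 := by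
  have h := (abs_apply_le_eunorm (rotatingGain s *ᵥ Pi.single b 1) a).trans
    (eunorm_rotatingGain_mulVec_le hs _)
  have he : eunorm (Pi.single b 1 : Fin 2 → ℝ) = 1 := by
    fin_cases b <;> simp [eunorm]
  simpa [he] using h

/-- The gain integrated over `[0, T]`. -/
def gainIntegral (T : ℝ) : Matrix (Fin 2) (Fin 2) ℝ :=
  Matrix.of fun a b => ∫ t in (0 : ℝ)..T, shiftedGain t a b

lemma dotProduct_gainIntegral_mulVec (T : ℝ) (v : Fin 2 → ℝ) :
    v ⬝ᵥ (gainIntegral T *ᵥ v) = ∫ t in (0 : ℝ)..T, v ⬝ᵥ (shiftedGain t *ᵥ v) := by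
  have hc := continuous_shiftedGain_apply
  have hi : ∀ a b, IntervalIntegrable (fun t => shiftedGain t a b * v b) volume 0 T :=
    fun a b => ((hc a b).mul_const _).intervalIntegrable _ _
  simp only [dotProduct, mulVec, gainIntegral, of_apply]
  rw [intervalIntegral.integral_finsetSum fun a _ => Continuous.intervalIntegrable
    (by fun_prop) _ _]
  simp only [intervalIntegral.integral_const_mul]
  refine Finset.sum_congr rfl fun a _ => ?_
  rw [intervalIntegral.integral_finsetSum fun b _ => hi a b]
  simp only [intervalIntegral.integral_mul_const]

/-- An antiderivative of the squared component of the unit vector `v` along the second frame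
vector. -/
def frameEnergy (v : Fin 2 → ℝ) (s : ℝ) : ℝ :=
  s / 2 - (v 0 ^ 2 - v 1 ^ 2) * (s * (Real.cos (Real.log s) + Real.sin (Real.log s))) / 4
    - v 0 * v 1 * (s * (Real.sin (Real.log s) - Real.cos (Real.log s))) / 2

lemma hasDerivAt_frameEnergy {v : Fin 2 → ℝ} (hv : v 0 ^ 2 + v 1 ^ 2 = 1) {s : ℝ} (hs : s ≠ 0) :
    HasDerivAt (frameEnergy v)
      ((v 1 * Real.cos (framePhase s) - v 0 * Real.sin (framePhase s)) ^ 2) s := by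
  have hl := Real.hasDerivAt_log hs
  have h := (((hasDerivAt_id s).div_const 2).sub
    ((((hasDerivAt_id s).mul (hl.cos.add hl.sin)).const_mul (v 0 ^ 2 - v 1 ^ 2)).div_const 4)).sub
    ((((hasDerivAt_id s).mul (hl.sin.sub hl.cos)).const_mul (v 0 * v 1)).div_const 2)
  refine h.congr_deriv ?_
  have hlog : Real.log s = 2 * framePhase s := by rw [framePhase]; ring
  simp only [id, Pi.add_apply, Pi.sub_apply, hlog, Real.cos_two_mul, Real.sin_two_mul]
  have hcd := Real.cos_sq_add_sin_sq (framePhase s)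
  field_simp
  linear_combination (-8 * v 0 ^ 2) * hcd + (-4) * hv

lemma le_frameEnergy_sub {v : Fin 2 → ℝ} (hv : v 0 ^ 2 + v 1 ^ 2 = 1) {s r : ℝ} (hs : 0 ≤ s)
    (hr : 0 ≤ r) : s / 8 - 7 / 8 * r ≤ frameEnergy v s - frameEnergy v r := by
  have key : ∀ x : ℝ, |(v 0 ^ 2 - v 1 ^ 2) * (Real.cos x + Real.sin x) / 4
      + v 0 * v 1 * (Real.sin x - Real.cos x) / 2| ≤ 3 / 8 := fun x => by
    have hcd := Real.cos_sq_add_sin_sq x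
    refine abs_le_of_sq_le_sq ?_ (by norm_num)
    have hPR : (v 0 ^ 2 - v 1 ^ 2) ^ 2 + (2 * v 0 * v 1) ^ 2 = 1 := by
      linear_combination (v 0 ^ 2 + v 1 ^ 2 + 1) * hv
    nlinarith [sq_nonneg ((v 0 ^ 2 - v 1 ^ 2) * (Real.sin x - Real.cos x)
      - 2 * v 0 * v 1 * (Real.cos x + Real.sin x)),
      congrArg₂ (· * ·) hPR hcd]
  have h1 := mul_le_mul_of_nonneg_left (abs_le.1 (key (Real.log s))).2 hs
  have h2 := mul_le_mul_of_nonneg_left (abs_le.1 (key (Real.log r))).1 hr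
  unfold frameEnergy
  linarith

lemma le_dotProduct_gainIntegral_mulVec {v : Fin 2 → ℝ} (hv : v 0 ^ 2 + v 1 ^ 2 = 1) {T : ℝ}
    (hT : 0 ≤ T) : T / 32 - 3 / 8 ≤ v ⬝ᵥ (gainIntegral T *ᵥ v) := by
  have hQ : Continuous fun t => v ⬝ᵥ (shiftedGain t *ᵥ v) := by
    have hc := continuous_shiftedGain_apply
    simp only [dotProduct, mulVec]
    fun_prop
  have hlow : (frameEnergy v (T + 2) / 4 - frameEnergy v (0 + 2) / 4) ≤
      ∫ t in (0 : ℝ)..T, v ⬝ᵥ (shiftedGain t *ᵥ v) := by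
    have hd : ∀ t : ℝ, 0 ≤ t → HasDerivAt (fun t => frameEnergy v (t + 2) / 4)
        ((v 1 * Real.cos (framePhase (t + 2)) - v 0 * Real.sin (framePhase (t + 2))) ^ 2 / 4) t :=
      fun t ht => ((hasDerivAt_frameEnergy hv (by positivity)).comp_add_const t 2).div_const 4
    refine intervalIntegral.sub_le_integral_of_hasDeriv_right_of_le hT
      (fun t ht => (hd t ht.1).continuousAt.continuousWithinAt)
      (fun t ht => (hd t ht.1.le).hasDerivWithinAt) hQ.integrableOn_Icc fun t ht => ?_
    rw [shiftedGain_of_nonneg ht.1.le, dotProduct_rotatingGain_mulVec]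
    exact le_add_of_nonneg_left (sq_nonneg _)
  rw [dotProduct_gainIntegral_mulVec]
  linarith [le_frameEnergy_sub hv (show 0 ≤ T + 2 by positivity) (show (0 : ℝ) ≤ 0 + 2 by norm_num)]

lemma eunorm_single_zero : eunorm (Pi.single 0 1 : Fin 2 → ℝ) = 1 := by simp [eunorm]

lemma le_sigmaMin_gainIntegral {T : ℝ} (hT : 0 ≤ T) :
    T / 32 - 3 / 8 ≤ sigmaMin (gainIntegral T) := by
  refine le_csInf ⟨_, Pi.single 0 1, eunorm_single_zero, rfl⟩ ?_
  rintro _ ⟨v, hv, rfl⟩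
  have hv' : v 0 ^ 2 + v 1 ^ 2 = 1 := by rw [← eunorm_sq_fin_two, hv, one_pow]
  exact (le_dotProduct_gainIntegral_mulVec hv' hT).trans (dotProduct_le_eunorm hv _)

lemma sigmaMin_gainIntegral_le {T : ℝ} (hT : 0 ≤ T) : sigmaMin (gainIntegral T) ≤ 2 * T := by
  have hle : sigmaMin (gainIntegral T) ≤ eunorm (gainIntegral T *ᵥ Pi.single 0 1) :=
    csInf_le ⟨0, by rintro _ ⟨v, _, rfl⟩; exact eunorm_nonneg _⟩
      ⟨Pi.single 0 1, eunorm_single_zero, rfl⟩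
  have hentry : ∀ a b, |gainIntegral T a b| ≤ T := fun a b => by
    have h := intervalIntegral.norm_integral_le_of_norm_le_const
      (a := 0) (b := T) (C := 1) (f := fun t => shiftedGain t a b)
      fun t _ => abs_rotatingGain_apply_le (by linarith [le_max_right t 0]) a b
    simpa [gainIntegral, abs_of_nonneg hT] using h
  refine hle.trans (le_of_sq_le_sq ?_ (by positivity))
  rw [eunorm_sq_fin_two]
  simp only [mulVec_single_one, col_apply]
  nlinarith [sq_le_sq' (abs_le.1 (hentry 0 0)).1 (abs_le.1 (hentry 0 0)).2,
    sq_le_sq' (abs_le.1 (hentry 1 0)).1 (abs_le.1 (hentry 1 0)).2, sq_nonneg T]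

lemma liminf_sigmaMin_gainIntegral_pos :
    0 < Filter.liminf (fun T : ℝ => (1 / T) * sigmaMin (gainIntegral T)) atTop := by
  have hup : ∀ᶠ T : ℝ in atTop, (1 / T) * sigmaMin (gainIntegral T) ≤ 2 := by
    filter_upwards [eventually_gt_atTop 0] with T hT
    rw [one_div_mul_eq_div, div_le_iff₀ hT]
    exact sigmaMin_gainIntegral_le hT.le
  have hlow : ∀ᶠ T : ℝ in atTop, 1 / 64 ≤ (1 / T) * sigmaMin (gainIntegral T) := by
    filter_upwards [eventually_ge_atTop 24] with T hT
    rw [one_div_mul_eq_div, le_div_iff₀ (by linarith)]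
    linarith [le_sigmaMin_gainIntegral (show 0 ≤ T by linarith)]
  exact (show (0 : ℝ) < 1 / 64 by norm_num).trans_le
    (le_liminf_of_le (isCoboundedUnder_ge_of_eventually_le _ hup) hlow)

lemma hasDerivAt_spiral {s : ℝ} (hs : s ≠ 0) (a : Fin 2) :
    HasDerivAt (fun r => spiral r a) ((rotatingGain s *ᵥ (-spiral s)) a) s := by
  have he := ((hasDerivAt_const s (1 : ℝ)).div (hasDerivAt_id s) hs).exp
  have hθ : HasDerivAt framePhase (s⁻¹ / 2) s := (Real.hasDerivAt_log hs).div_const 2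
  have hcd := Real.cos_sq_add_sin_sq (framePhase s)
  fin_cases a
  · refine (he.mul hθ.cos).congr_deriv ?_
    simp only [rotatingGain, spiral, mulVec, dotProduct, Fin.sum_univ_two, of_apply, cons_val',
      cons_val_zero, cons_val_one, cons_val_fin_one, Pi.neg_apply, Pi.div_apply, id, Fin.zero_eta,
      Fin.isValue]
    generalize Real.cos (framePhase s) = c at *
    generalize Real.sin (framePhase s) = d at *
    field_simp
    linear_combination (16 * c + 8 * s * d) * hcd
  · refine (he.mul hθ.sin).congr_deriv ?_
    simp only [rotatingGain, spiral, mulVec, dotProduct, Fin.sum_univ_two, of_apply, cons_val',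
      cons_val_zero, cons_val_one, cons_val_fin_one, Pi.neg_apply, Pi.div_apply, id, Fin.mk_one,
      Fin.isValue]
    generalize Real.cos (framePhase s) = c at *
    generalize Real.sin (framePhase s) = d at *
    field_simp
    linear_combination (16 * d - 8 * s * c) * hcd

lemma one_le_spiral_sq {s : ℝ} (hs : 0 ≤ s) : 1 ≤ spiral s 0 ^ 2 + spiral s 1 ^ 2 := by
  have hcd := Real.cos_sq_add_sin_sq (framePhase s)
  have he : 1 ≤ Real.exp (1 / s) := Real.one_le_exp (by positivity)
  have h : spiral s 0 ^ 2 + spiral s 1 ^ 2 = Real.exp (1 / s) ^ 2 := by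
    simp only [spiral, cons_val_zero, cons_val_one]
    linear_combination Real.exp (1 / s) ^ 2 * hcd
  rw [h]
  exact one_le_pow₀ he

theorem stmt9 :
    ∃ (p n : ℕ), 2 ≤ p ∧ 1 ≤ n ∧
      ∃ (Γ : Matrix (Fin p) (Fin p) ℝ) (Q : ℝ → Matrix (Fin n) (Fin n) ℝ),
        IsInterconnection Γ ∧ ConnectedMat Γ ∧
        (∀ t : ℝ, 0 ≤ t → InQbar (Q t)) ∧
        (∀ a b : Fin n, ∀ s u : ℝ, IntervalIntegrable (fun t => Q t a b) volume s u) ∧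
        0 < Filter.liminf
          (fun T : ℝ => (1 / T) * sigmaMin (Matrix.of fun a b => ∫ t in (0 : ℝ)..T, Q t a b))
          atTop ∧
        ∃ x : Fin p → ℝ → Fin n → ℝ,
          (∀ i, ∀ t : ℝ, 0 ≤ t → ∀ a : Fin n,
            HasDerivAt (fun s => x i s a)
              (((Q t).mulVec
                (∑ j ∈ Finset.univ.filter (fun j => j ≠ i), Γ i j • (x j t - x i t))) a) t) ∧
          ¬ ∃ xbar : ℝ → Fin n → ℝ,
              ∀ i, Tendsto (fun t => eunorm (x i t - xbar t)) atTop (nhds 0) := by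
  refine ⟨2, 2, le_rfl, one_le_two, !![0, 0; 1, -1], shiftedGain, ⟨?_, ?_⟩, ⟨0, ?_⟩,
    fun t ht => ?_, fun a b s u => (continuous_shiftedGain_apply a b).intervalIntegrable s u,
    liminf_sigmaMin_gainIntegral_pos, ![fun _ => 0, fun t => spiral (t + 2)], ?_, ?_⟩
  · intro i j hij
    fin_cases i <;> fin_cases j <;> simp at hij ⊢
  · intro i
    fin_cases i <;> simp [Finset.sum_filter]
  · intro u
    fin_cases u
    · exact .refl
    · exact .single (by simp)
  · rw [shiftedGain_of_nonneg ht]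
    exact inQbar_rotatingGain (by linarith)
  · intro i t ht a
    rw [shiftedGain_of_nonneg ht]
    fin_cases i
    · simpa [Finset.sum_filter] using hasDerivAt_const t (0 : ℝ)
    · simpa [Finset.sum_filter] using
        (hasDerivAt_spiral (show t + 2 ≠ 0 by positivity) a).comp_add_const t 2
  · rintro ⟨xbar, hx⟩
    have hcoord : ∀ a, Tendsto (fun t : ℝ => spiral (t + 2) a) atTop (nhds 0) := fun a => by
      have h : ∀ i, Tendsto (fun t =>
          ((![fun _ => 0, fun t => spiral (t + 2)] : Fin 2 → ℝ → Fin 2 → ℝ) i t - xbar t) a)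
          atTop (nhds 0) :=
        fun i => squeeze_zero_norm (fun t => abs_apply_le_eunorm _ a) (hx i)
      simpa using (h 1).sub (h 0)
    have hsq := ((hcoord 0).pow 2).add ((hcoord 1).pow 2)
    have hge := ge_of_tendsto hsq (b := 1) <| by
      filter_upwards [eventually_ge_atTop 0] with t ht
      exact one_le_spiral_sq (by positivity)
    norm_num at hge
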